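/- arXiv:1607.04586 — 2 statements merged into one kernel-verified Lean document; each statement's English description precedes it below -/
import Mathlib

section
/- (p-adic Hahn–Banach theorem.) Let p be a prime, let G be a torsion-free abelian group, let t be a p-adic sublinear pseudometric on G, let H be a subgroup of G, and let f : H → ℤ_p be a t-contractive homomorphism. Then there exists a group homomorphism f' : G → ℤ_p extending f (f'(h) = f(h) for all h ∈ H) such that ‖f'(g₁) − f'(g₂)‖ ≤ t(g₁, g₂) for all g₁, g₂ ∈ G. -/
/-- `g` is divisible by `p ^ k` in `G`. -/
def pDvd (p : ℕ) {G : Type*} [AddCommGroup G] (k : ℕ) (g : G) : Prop :=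
  ∃ x : G, p ^ k • x = g

/-- The `p`-adic pseudometric on a torsion-free abelian group. -/
noncomputable def pdist (p : ℕ) {G : Type*} [AddCommGroup G] (g h : G) : ℝ :=
  sInf {r : ℝ | ∃ k : ℕ, pDvd p k (g - h) ∧ r = (p : ℝ) ^ (-(k : ℤ))}

/-- A `p`-adic sublinear pseudometric on `G`: a pseudometric that is translation
invariant, absolutely scalable, dominated by the `p`-adic pseudometric, and
satisfies the strong triangle inequality. -/
structure IsPadicSublinear (p : ℕ) [Fact p.Prime] {G : Type*} [AddCommGroup G]
    (t : G → G → ℝ) : Prop where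
  nonneg : ∀ g h : G, 0 ≤ t g h
  refl : ∀ g : G, t g g = 0
  symm : ∀ g h : G, t g h = t h g
  translation : ∀ g₁ g₂ h : G, t (g₁ + h) (g₂ + h) = t g₁ g₂
  scalable : ∀ (n : ℤ) (g₁ g₂ : G), t (n • g₁) (n • g₂) = ‖(n : ℤ_[p])‖ * t g₁ g₂
  dominated : ∀ g₁ g₂ : G, t g₁ g₂ ≤ pdist p g₁ g₂
  strong : ∀ g₁ g₂ g₃ : G, t g₁ g₂ ≤ max (t g₁ g₃) (t g₃ g₂)

/-!
As for Ingleton's theorem, one adjoins a single `g : G` to the domain and then applies Zorn's lemma.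
A value `a` at `g` is admissible when `‖x + r a‖ ≤ N (h + r g)` for all `h` in the domain, with
value `x`, and all scalars `r`, where `N g = t g 0`. For `r ≠ 0` this places `a` in the closed ball
with centre `-x / r` and radius `N (h + r g) / ‖r‖`. Contractivity on the domain makes the distance
between two centres at most the larger radius, so by the ultrametric inequality the balls are
totally ordered by inclusion, and compactness gives a common point. The extension takes values in
`ℚ_[p]` and is bounded by `N ≤ 1`, hence lands in `ℤ_[p]`.
-/

open Metric

section Balls

variable {X ι : Type*} [PseudoMetricSpace X] [IsUltrametricDist X]

lemma closedBall_subset_closedBall_of_dist_le {x y : X} {r s : ℝ}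
    (hxy : dist x y ≤ s) (hrs : r ≤ s) : closedBall x r ⊆ closedBall y s := by
  rw [IsUltrametricDist.closedBall_eq_of_mem (mem_closedBall.2 hxy)]
  exact closedBall_subset_closedBall hrs

theorem nonempty_iInter_closedBall_of_dist_le_max [ProperSpace X] [Nonempty ι]
    {c : ι → X} {r : ι → ℝ} (h : ∀ i j, dist (c i) (c j) ≤ max (r i) (r j)) :
    (⋂ i, closedBall (c i) (r i)).Nonempty := by
  refine IsCompact.nonempty_iInter_of_directed_nonempty_isCompact_isClosed _ (fun i j ↦ ?_)
    (fun i ↦ ?_) (fun i ↦ isCompact_closedBall _ _) (fun i ↦ isClosed_closedBall)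
  · rcases le_total (r i) (r j) with hij | hji
    · exact ⟨i, subset_rfl,
        closedBall_subset_closedBall_of_dist_le ((h i j).trans_eq (max_eq_right hij)) hij⟩
    · exact ⟨j, closedBall_subset_closedBall_of_dist_le ((h j i).trans_eq (max_eq_right hji)) hji,
        subset_rfl⟩
  · have hr : 0 ≤ r i := by simpa only [dist_self, max_self] using h i i
    exact nonempty_closedBall.2 hr

end Balls

section Extension

variable {R K G : Type*} [CommRing R] [NormedField K] [Algebra R K] [AddCommGroup G] [Module R G]
  {N : NonarchAddGroupSeminorm G} {Γ : Submodule R (G × K)}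

/-- A submodule of `G × K` whose points satisfy `‖x.2‖ ≤ N x.1`. Since `N 0 = 0`, these are exactly
the graphs of the `N`-contractive linear maps from submodules of `G` to `K`; encoding such partial
maps by their graphs turns extension into inclusion, as Zorn's lemma requires. -/
def IsContractiveGraph (N : NonarchAddGroupSeminorm G) (Γ : Submodule R (G × K)) : Prop :=
  ∀ x ∈ Γ, ‖x.2‖ ≤ N x.1

namespace IsContractiveGraph

lemma norm_sub_smul_le_max (hΓ : IsContractiveGraph N Γ)
    (hN : ∀ (r : R) (g : G), N (r • g) = ‖algebraMap R K r‖ * N g) (g : G) {x y : G × K}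
    (hx : x ∈ Γ) (hy : y ∈ Γ) (r s : R) :
    ‖s • x.2 - r • y.2‖ ≤
      max (‖algebraMap R K s‖ * N (x.1 + r • g)) (‖algebraMap R K r‖ * N (y.1 + s • g)) :=
  calc ‖s • x.2 - r • y.2‖
    _ ≤ N (s • x.1 - r • y.1) := hΓ _ (Γ.sub_mem (Γ.smul_mem s hx) (Γ.smul_mem r hy))
    _ = N (s • (x.1 + r • g) - r • (y.1 + s • g)) := by
      rw [smul_add, smul_add, smul_comm s r g, add_sub_add_right_eq_sub]
    _ ≤ max (N (s • (x.1 + r • g))) (N (r • (y.1 + s • g))) := map_sub_le_max N _ _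
    _ = _ := by rw [hN, hN]

lemma dist_neg_div_le_max (hΓ : IsContractiveGraph N Γ)
    (hN : ∀ (r : R) (g : G), N (r • g) = ‖algebraMap R K r‖ * N g) (g : G) {x y : G × K}
    (hx : x ∈ Γ) (hy : y ∈ Γ) {r s : R} (hr : algebraMap R K r ≠ 0) (hs : algebraMap R K s ≠ 0) :
    dist (-(x.2 / algebraMap R K r)) (-(y.2 / algebraMap R K s)) ≤
      max (N (x.1 + r • g) / ‖algebraMap R K r‖) (N (y.1 + s • g) / ‖algebraMap R K s‖) := by
  have h_pos : 0 < ‖algebraMap R K r‖ * ‖algebraMap R K s‖ :=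
    mul_pos (norm_pos_iff.2 hr) (norm_pos_iff.2 hs)
  have h_sub : x.2 / algebraMap R K r - y.2 / algebraMap R K s =
      (s • x.2 - r • y.2) / (algebraMap R K r * algebraMap R K s) := by
    rw [Algebra.smul_def, Algebra.smul_def]
    field_simp
  rw [dist_neg_neg, dist_eq_norm, h_sub, norm_div, norm_mul, div_le_iff₀ h_pos]
  refine (hΓ.norm_sub_smul_le_max hN g hx hy r s).trans_eq ?_
  rw [max_mul_of_nonneg _ _ h_pos.le]
  congr 1 <;> field_simp

lemma norm_add_smul_le_of_algebraMap_eq_zero (hΓ : IsContractiveGraph N Γ)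
    (hN : ∀ (r : R) (g : G), N (r • g) = ‖algebraMap R K r‖ * N g) (g : G) (a : K) {x : G × K}
    (hx : x ∈ Γ) {r : R} (hr : algebraMap R K r = 0) : ‖x.2 + r • a‖ ≤ N (x.1 + r • g) := by
  have hrg : N (r • g) = 0 := by rw [hN, hr, norm_zero, zero_mul]
  calc ‖x.2 + r • a‖
    _ = ‖x.2‖ := by rw [Algebra.smul_def, hr, zero_mul, add_zero]
    _ ≤ N x.1 := hΓ x hx
    _ = N (x.1 + r • g - r • g) := by rw [add_sub_cancel_right]
    _ ≤ max (N (x.1 + r • g)) (N (r • g)) := map_sub_le_max N _ _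
    _ = N (x.1 + r • g) := by rw [hrg, max_eq_left (apply_nonneg N _)]

theorem exists_forall_norm_add_smul_le [IsUltrametricDist K] [ProperSpace K]
    (hΓ : IsContractiveGraph N Γ)
    (hN : ∀ (r : R) (g : G), N (r • g) = ‖algebraMap R K r‖ * N g) (g : G) :
    ∃ a : K, ∀ x ∈ Γ, ∀ r : R, ‖x.2 + r • a‖ ≤ N (x.1 + r • g) := by
  let ι := Γ × {r : R // algebraMap R K r ≠ 0}
  let center : ι → K := fun i ↦ -(i.1.1.2 / algebraMap R K i.2)
  let radius : ι → ℝ := fun i ↦ N (i.1.1.1 + i.2.1 • g) / ‖algebraMap R K i.2‖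
  have : Nonempty ι := ⟨0, 1, by rw [map_one]; exact one_ne_zero⟩
  obtain ⟨a, ha⟩ : (⋂ i, closedBall (center i) (radius i)).Nonempty :=
    nonempty_iInter_closedBall_of_dist_le_max fun i j ↦
      hΓ.dist_neg_div_le_max hN g i.1.2 j.1.2 i.2.2 j.2.2
  refine ⟨a, fun x hx r ↦ ?_⟩
  by_cases hr : algebraMap R K r = 0
  · exact hΓ.norm_add_smul_le_of_algebraMap_eq_zero hN g a hx hr
  have h_ball : ‖a - -(x.2 / algebraMap R K r)‖ ≤ N (x.1 + r • g) / ‖algebraMap R K r‖ :=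
    mem_closedBall_iff_norm.1 (Set.mem_iInter.1 ha (⟨x, hx⟩, ⟨r, hr⟩))
  have h_factor : x.2 + r • a = (a - -(x.2 / algebraMap R K r)) * algebraMap R K r := by
    rw [Algebra.smul_def]
    field_simp
    ring
  rwa [h_factor, norm_mul, ← le_div_iff₀ (norm_pos_iff.2 hr)]

lemma sup_span_singleton {g : G} {a : K}
    (ha : ∀ x ∈ Γ, ∀ r : R, ‖x.2 + r • a‖ ≤ N (x.1 + r • g)) :
    IsContractiveGraph N (Γ ⊔ Submodule.span R {(g, a)}) := by
  intro z hz
  obtain ⟨x, hx, y, hy, rfl⟩ := Submodule.mem_sup.1 hz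
  obtain ⟨r, rfl⟩ := Submodule.mem_span_singleton.1 hy
  exact ha x hx r

lemma sSup_of_directedOn {C : Set (Submodule R (G × K))} (hC : ∀ Δ ∈ C, IsContractiveGraph N Δ)
    (hne : C.Nonempty) (hdir : DirectedOn (· ≤ ·) C) : IsContractiveGraph N (sSup C) := by
  intro x hx
  obtain ⟨Δ, hΔ, hxΔ⟩ := (Submodule.mem_sSup_of_directed hne hdir).1 hx
  exact hC Δ hΔ x hxΔ

theorem exists_le_maximal (hΓ : IsContractiveGraph N Γ) :
    ∃ Δ, Γ ≤ Δ ∧ Maximal (IsContractiveGraph N) Δ :=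
  zorn_le_nonempty₀ {Δ | IsContractiveGraph N Δ}
    (fun C hC hchain Δ hΔ ↦
      ⟨sSup C, sSup_of_directedOn hC ⟨Δ, hΔ⟩ hchain.directedOn, fun _ ↦ le_sSup⟩) Γ hΓ

theorem exists_mem_of_maximal [IsUltrametricDist K] [ProperSpace K]
    (hΓ : Maximal (IsContractiveGraph N) Γ)
    (hN : ∀ (r : R) (g : G), N (r • g) = ‖algebraMap R K r‖ * N g) (g : G) :
    ∃ a : K, (g, a) ∈ Γ := by
  obtain ⟨a, ha⟩ := hΓ.prop.exists_forall_norm_add_smul_le hN g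
  have h_le : Γ ⊔ Submodule.span R {(g, a)} ≤ Γ :=
    hΓ.le_of_ge (sup_span_singleton ha) le_sup_left
  exact ⟨a, h_le (Submodule.mem_sup_right (Submodule.mem_span_singleton_self _))⟩

lemma snd_eq_of_fst_eq (hΓ : IsContractiveGraph N Γ) {x y : G × K} (hx : x ∈ Γ) (hy : y ∈ Γ)
    (h : x.1 = y.1) : x.2 = y.2 := by
  have h_norm : ‖x.2 - y.2‖ ≤ N (x.1 - y.1) := hΓ _ (Γ.sub_mem hx hy)
  rw [h, sub_self, map_zero] at h_norm
  exact sub_eq_zero.1 (norm_le_zero_iff.1 h_norm)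

theorem exists_eq_graph (hΓ : IsContractiveGraph N Γ) (h_total : ∀ g, ∃ a, (g, a) ∈ Γ) :
    ∃ F : G →ₗ[R] K, Γ = F.graph := by
  refine Submodule.exists_eq_graph ⟨fun x y hxy ↦ ?_, fun g ↦ ?_⟩
  · exact Subtype.ext (Prod.ext hxy (hΓ.snd_eq_of_fst_eq x.2 y.2 hxy))
  · obtain ⟨a, ha⟩ := h_total g
    exact ⟨⟨(g, a), ha⟩, rfl⟩

end IsContractiveGraph

theorem exists_linearMap_extension_norm_le [IsUltrametricDist K] [ProperSpace K]
    (hN : ∀ (r : R) (g : G), N (r • g) = ‖algebraMap R K r‖ * N g)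
    (H : Submodule R G) (f : H →ₗ[R] K) (hf : ∀ h : H, ‖f h‖ ≤ N h) :
    ∃ F : G →ₗ[R] K, (∀ h : H, F h = f h) ∧ ∀ g, ‖F g‖ ≤ N g := by
  have h_graph : IsContractiveGraph N (H.subtype.prod f).range := by
    rintro _ ⟨h, rfl⟩
    exact hf h
  obtain ⟨Γ, hfΓ, hΓ⟩ := h_graph.exists_le_maximal
  obtain ⟨F, rfl⟩ := hΓ.prop.exists_eq_graph (IsContractiveGraph.exists_mem_of_maximal hΓ hN)
  refine ⟨F, fun h ↦ ?_, fun g ↦ hΓ.prop (g, F g) rfl⟩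
  exact ((LinearMap.mem_graph_iff F _).1 (hfΓ ⟨h, rfl⟩)).symm

end Extension

section Padic

variable {p : ℕ} {G : Type*} [AddCommGroup G]

lemma pdist_le_one (g h : G) : pdist p g h ≤ 1 := by
  refine csInf_le ⟨0, ?_⟩ ⟨0, ⟨g - h, by rw [pow_zero, one_smul]⟩, by simp⟩
  rintro _ ⟨k, -, rfl⟩
  positivity

variable [Fact p.Prime]

lemma exists_padicInt_lift (F : G →+ ℚ_[p]) (hF : ∀ g, ‖F g‖ ≤ 1) :
    ∃ f : G →+ ℤ_[p], ∀ g, (f g : ℚ_[p]) = F g :=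
  ⟨AddMonoidHom.mk' (fun g ↦ ⟨F g, hF g⟩) fun a b ↦ PadicInt.ext (map_add F a b), fun _ ↦ rfl⟩

namespace IsPadicSublinear

variable {t : G → G → ℝ}

lemma eq_sub_zero (ht : IsPadicSublinear p t) (a b : G) : t a b = t (a - b) 0 := by
  simpa only [sub_add_cancel, zero_add] using ht.translation (a - b) 0 b

/-- The seminorm `g ↦ t g 0` of a `p`-adic sublinear pseudometric `t`, which determines `t` by
translation invariance. -/
def seminorm (ht : IsPadicSublinear p t) : NonarchAddGroupSeminorm G where
  toFun g := t g 0
  map_zero' := ht.refl 0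
  add_le_max' a b := by
    have h := ht.strong (a + b) 0 b
    rwa [ht.eq_sub_zero (a + b) b, add_sub_cancel_right] at h
  neg' g := by rw [ht.symm, ht.eq_sub_zero, sub_neg_eq_add, zero_add]

lemma seminorm_sub (ht : IsPadicSublinear p t) (a b : G) : ht.seminorm (a - b) = t a b :=
  (ht.eq_sub_zero a b).symm

lemma seminorm_zsmul (ht : IsPadicSublinear p t) (n : ℤ) (g : G) :
    ht.seminorm (n • g) = ‖algebraMap ℤ ℚ_[p] n‖ * ht.seminorm g := by
  have h := ht.scalable n g 0
  rwa [smul_zero, PadicInt.norm_def, PadicInt.coe_intCast] at h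

lemma seminorm_le_one (ht : IsPadicSublinear p t) (g : G) : ht.seminorm g ≤ 1 :=
  (ht.dominated g 0).trans (pdist_le_one g 0)

end IsPadicSublinear

end Padic

theorem stmt5_general (p : ℕ) [Fact p.Prime] (G : Type*) [AddCommGroup G]
    (t : G → G → ℝ) (ht : IsPadicSublinear p t) (H : AddSubgroup G) (f : H →+ ℤ_[p])
    (hf : ∀ h₁ h₂ : H, ‖f h₁ - f h₂‖ ≤ t (h₁ : G) (h₂ : G)) :
    ∃ f' : G →+ ℤ_[p],
      (∀ (h : G) (hh : h ∈ H), f' h = f ⟨h, hh⟩) ∧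
      ∀ g₁ g₂ : G, ‖f' g₁ - f' g₂‖ ≤ t g₁ g₂ := by
  let f₀ : H →+ ℚ_[p] := PadicInt.Coe.ringHom.toAddMonoidHom.comp f
  have hf₀ : ∀ h : H, ‖f₀ h‖ ≤ ht.seminorm h := fun h ↦ by
    have h_zero := hf h 0
    rwa [map_zero, sub_zero, PadicInt.norm_def] at h_zero
  obtain ⟨F, hFf, hF⟩ := exists_linearMap_extension_norm_le ht.seminorm_zsmul
    (AddSubgroup.toIntSubmodule H) f₀.toIntLinearMap hf₀
  obtain ⟨f', hf'⟩ := exists_padicInt_lift F.toAddMonoidHom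
    fun g ↦ (hF g).trans (ht.seminorm_le_one g)
  refine ⟨f', fun h hh ↦ PadicInt.ext ((hf' h).trans (hFf ⟨h, hh⟩)), fun g₁ g₂ ↦ ?_⟩
  rw [← map_sub, PadicInt.norm_def, hf', ← ht.seminorm_sub]
  exact hF (g₁ - g₂)

/-- The `p`-adic Hahn–Banach theorem: every `t`-contractive functional on a
subgroup of `G` extends to a `t`-contractive `p`-adic functional on all of `G`. -/
theorem stmt5 (p : ℕ) [Fact p.Prime] (G : Type*) [AddCommGroup G]
    [NoZeroSMulDivisors ℤ G] (t : G → G → ℝ) (ht : IsPadicSublinear p t)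
    (H : AddSubgroup G) (f : H →+ ℤ_[p])
    (hf : ∀ h₁ h₂ : H, ‖f h₁ - f h₂‖ ≤ t (h₁ : G) (h₂ : G)) :
    ∃ f' : G →+ ℤ_[p],
      (∀ (h : G) (hh : h ∈ H), f' h = f ⟨h, hh⟩) ∧
      ∀ g₁ g₂ : G, ‖f' g₁ - f' g₂‖ ≤ t g₁ g₂ := by
  exact stmt5_general p G t ht H f hf
end

section
/- Let p be a prime, let G be a torsion-free abelian group, and let g ∈ G. Then there exists a p-adic functional f : G → ℤ_p such that ‖f(g)‖ = d_p(g, 0). -/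
/-!
If `x` is not divisible by `p` and `G` has no `p`-torsion, then `p ^ n • x` is not divisible by
`p ^ (n + 1)`, so injectivity of `ℚ/ℤ` gives a homomorphism `φₙ : G → ℤ/pⁿ⁺¹` with
`pⁿ φₙ(x) ≠ 0`. Arbitrary lifts of the `φₙ` to maps `G → ℤ_p` are additive modulo `pⁿ⁺¹` and have
norm one at `x`; as `ℤ_p` is compact, a pointwise limit along an ultrafilter exists, and it is a
functional of norm one at `x`. An element `g` of finite height is `p ^ k • x` for such an `x`, and
for one of infinite height the zero functional works.
-/

open Filter Topology

section pdist

variable {p : ℕ} {G : Type*} [AddCommGroup G]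

lemma pDvd_zero_left (g : G) : pDvd p 0 g :=
  ⟨g, by rw [pow_zero, one_smul]⟩

lemma pDvd.mono {m k : ℕ} {g : G} (h : pDvd p k g) (hmk : m ≤ k) : pDvd p m g := by
  obtain ⟨x, rfl⟩ := h
  exact ⟨p ^ (k - m) • x, by rw [smul_smul, pow_mul_pow_sub p hmk]⟩

lemma exists_pDvd_and_not_pDvd_succ {g : G} (hg : ¬ ∀ k, pDvd p k g) :
    ∃ k, pDvd p k g ∧ ¬ pDvd p (k + 1) g := by
  by_contra! hsucc
  exact hg fun k => Nat.rec (pDvd_zero_left g) hsucc k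

lemma pdist_eq_zero_of_forall_pDvd (hp : 1 < p) {g h : G} (hgh : ∀ k, pDvd p k (g - h)) :
    pdist p g h = 0 := by
  have hp' : (1 : ℝ) < p := mod_cast hp
  have hnonneg : (0 : ℝ) ∈
      lowerBounds {r : ℝ | ∃ k : ℕ, pDvd p k (g - h) ∧ r = (p : ℝ) ^ (-(k : ℤ))} := by
    rintro r ⟨k, -, rfl⟩
    positivity
  have hlim : Tendsto (fun k : ℕ => (p : ℝ) ^ (-(k : ℤ))) atTop (𝓝 0) := by
    simpa only [zpow_neg, zpow_natCast, inv_pow] using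
      tendsto_pow_atTop_nhds_zero_of_lt_one (by positivity) (inv_lt_one_of_one_lt₀ hp')
  exact le_antisymm (ge_of_tendsto' hlim fun k => csInf_le ⟨0, hnonneg⟩ ⟨k, hgh k, rfl⟩)
    (le_csInf ⟨_, 0, hgh 0, rfl⟩ hnonneg)

lemma pdist_eq_zpow_neg (hp : 1 ≤ p) {g h : G} {k : ℕ} (hk : pDvd p k (g - h))
    (hk' : ¬ pDvd p (k + 1) (g - h)) : pdist p g h = (p : ℝ) ^ (-(k : ℤ)) := by
  refine IsLeast.csInf_eq ⟨⟨k, hk, rfl⟩, ?_⟩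
  rintro r ⟨m, hm, rfl⟩
  have hmk : m ≤ k := by
    by_contra! hkm
    exact hk' (hm.mono hkm)
  exact zpow_le_zpow_right₀ (mod_cast hp) (by lia)

end pdist

section zmod

lemma exists_injective_zmod_addCircle {𝕜 : Type*} [Field 𝕜] [LinearOrder 𝕜]
    [IsStrictOrderedRing 𝕜] (T : 𝕜) [Fact (0 < T)] {N : ℕ} (hN : 0 < N) :
    ∃ ι : ZMod N →+ AddCircle T, Function.Injective ι ∧ ∀ u, N • u = 0 → u ∈ ι.range := by
  set ζ : AddCircle T := ((T / N : 𝕜) : AddCircle T)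
  have hζ : addOrderOf ζ = N := AddCircle.addOrderOf_period_div hN
  refine ⟨ZMod.lift N ⟨zmultiplesHom _ ζ, ?_⟩, (ZMod.lift_injective N).mpr fun m hm => ?_,
    fun u hu => ?_⟩
  · rw [zmultiplesHom_apply, natCast_zsmul, ← hζ, addOrderOf_nsmul_eq_zero]
  · rw [ZMod.intCast_zmod_eq_zero_iff_dvd, ← hζ]
    exact addOrderOf_dvd_iff_zsmul_eq_zero.mpr hm
  · obtain ⟨m, -, rfl⟩ := (AddCircle.nsmul_eq_zero_iff hN).mp hu
    refine ⟨((m : ℤ) : ZMod N), ?_⟩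
    rw [ZMod.lift_coe, zmultiplesHom_apply, natCast_zsmul, ← AddCircle.coe_nsmul, nsmul_eq_mul,
      div_mul_eq_mul_div, mul_div_assoc]

variable {G : Type*} [AddCommGroup G]

lemma exists_addMonoidHom_addCircle_apply_ne_zero {N : ℕ} {y : G}
    (hy : ∀ z : G, N • z ≠ y) :
    ∃ c : G →+ AddCircle (1 : ℚ), (∀ z, N • c z = 0) ∧ c y ≠ 0 := by
  let S : AddSubgroup G := (nsmulAddMonoidHom (α := G) N).range
  have hyS : (y : G ⧸ S) ≠ 0 := by
    rw [Ne, QuotientAddGroup.eq_zero_iff]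
    rintro ⟨z, hz⟩
    exact hy z hz
  obtain ⟨c : G ⧸ S →+ AddCircle (1 : ℚ), hc⟩ :=
    CharacterModule.exists_character_apply_ne_zero_of_ne_zero hyS
  refine ⟨c.comp (QuotientAddGroup.mk' S), fun z => ?_, hc⟩
  have hz : QuotientAddGroup.mk' S (N • z) = 0 := (QuotientAddGroup.eq_zero_iff _).mpr ⟨z, rfl⟩
  rw [← map_nsmul, AddMonoidHom.comp_apply, hz, map_zero]

lemma exists_addMonoidHom_zmod_apply_ne_zero {N : ℕ} (hN : 0 < N) {y : G}
    (hy : ∀ z : G, N • z ≠ y) : ∃ φ : G →+ ZMod N, φ y ≠ 0 := by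
  obtain ⟨c, hcN, hcy⟩ := exists_addMonoidHom_addCircle_apply_ne_zero hy
  obtain ⟨ι, hι, hι_range⟩ := exists_injective_zmod_addCircle (1 : ℚ) hN
  let φ : G →+ ZMod N := (AddMonoidHom.ofInjective hι).symm.toAddMonoidHom.comp
    (c.codRestrict ι.range fun z => hι_range _ (hcN z))
  have hφ : ι (φ y) = c y :=
    congrArg Subtype.val ((AddMonoidHom.ofInjective hι).apply_symm_apply _)
  exact ⟨φ, fun h => hcy (by rw [← hφ, h, map_zero])⟩

end zmod

lemma exists_ultrafilter_tendsto_addMonoidHom {α G A : Type*} [AddZeroClass G] [AddGroup A]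
    [TopologicalSpace A] [IsTopologicalAddGroup A] [CompactSpace A] [T2Space A]
    {l : Filter α} [l.NeBot] {F : α → G → A}
    (hF : ∀ y z, Tendsto (fun i => F i (y + z) - (F i y + F i z)) l (𝓝 0)) :
    ∃ U : Ultrafilter α, ↑U ≤ l ∧ ∃ f : G →+ A, ∀ y, Tendsto (F · y) U (𝓝 (f y)) := by
  let U := Ultrafilter.of l
  have hlim : ∀ y, ∃ a, Tendsto (F · y) U (𝓝 a) := fun y =>
    ⟨_, (U.map (F · y)).le_nhds_lim⟩
  choose f hf using hlim
  have hadd : ∀ y z, f (y + z) = f y + f z := fun y z => sub_eq_zero.mp <|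
    tendsto_nhds_unique ((hf (y + z)).sub ((hf y).add (hf z)))
      ((hF y z).mono_left (Ultrafilter.of_le l))
  exact ⟨U, Ultrafilter.of_le l, AddMonoidHom.mk' f hadd, hf⟩

section padic

variable {p : ℕ} [Fact p.Prime]

lemma norm_eq_one_of_pow_nsmul_toZModPow_ne_zero {n : ℕ} {a : ℤ_[p]}
    (ha : p ^ n • PadicInt.toZModPow (n + 1) a ≠ 0) : ‖a‖ = 1 := by
  rw [← PadicInt.isUnit_iff]
  by_contra hunit
  obtain ⟨b, rfl⟩ := (PadicInt.norm_lt_one_iff_dvd a).mp (PadicInt.not_isUnit_iff.mp hunit)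
  refine ha ?_
  rw [← map_nsmul, ← RingHom.mem_ker, PadicInt.ker_toZModPow, Ideal.mem_span_singleton,
    nsmul_eq_mul, Nat.cast_pow, ← mul_assoc, ← pow_succ]
  exact dvd_mul_right _ _

lemma tendsto_zero_of_toZModPow_eq_zero {α : Type*} {l : Filter α} {e : α → ℕ}
    (he : Tendsto e l atTop) {a : α → ℤ_[p]} (ha : ∀ i, PadicInt.toZModPow (e i) (a i) = 0) :
    Tendsto a l (𝓝 0) := by
  have hnorm : ∀ i, ‖a i‖ ≤ (p : ℝ)⁻¹ ^ e i := fun i => by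
    rw [inv_pow, ← zpow_natCast, ← zpow_neg, PadicInt.norm_le_pow_iff_mem_span_pow,
      ← PadicInt.ker_toZModPow, RingHom.mem_ker]
    exact ha i
  have hp : (1 : ℝ) < p := mod_cast (Fact.out : p.Prime).one_lt
  exact squeeze_zero_norm hnorm <|
    (tendsto_pow_atTop_nhds_zero_of_lt_one (by positivity) (inv_lt_one_of_one_lt₀ hp)).comp he

variable {G : Type*} [AddCommGroup G]

lemma exists_addMonoidHom_padicInt_norm_eq_one (hG : IsSMulRegular G p) {x : G}
    (hx : ∀ z : G, p • z ≠ x) : ∃ f : G →+ ℤ_[p], ‖f x‖ = 1 := by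
  have hp : p.Prime := Fact.out
  have hpow : ∀ n, ∀ z : G, p ^ (n + 1) • z ≠ p ^ n • x := fun n z hz =>
    hx z (hG.pow n (by simpa only [pow_succ, mul_smul] using hz))
  choose φ hφ using fun n =>
    exists_addMonoidHom_zmod_apply_ne_zero (pow_pos hp.pos (n + 1)) (hpow n)
  choose F hF using fun n y =>
    ZMod.ringHom_surjective (PadicInt.toZModPow (p := p) (n + 1)) (φ n y)
  have hadd : ∀ y z, Tendsto (fun n => F n (y + z) - (F n y + F n z)) atTop (𝓝 0) := fun y z =>
    tendsto_zero_of_toZModPow_eq_zero (tendsto_add_atTop_nat 1) fun n => by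
      rw [map_sub, map_add, hF, hF, hF, map_add, sub_self]
  have hnorm : ∀ n, ‖F n x‖ = 1 := fun n =>
    norm_eq_one_of_pow_nsmul_toZModPow_ne_zero (by rw [hF, ← map_nsmul]; exact hφ n)
  obtain ⟨U, -, f, hf⟩ := exists_ultrafilter_tendsto_addMonoidHom hadd
  refine ⟨f, tendsto_nhds_unique (hf x).norm ?_⟩
  simpa only [hnorm] using tendsto_const_nhds

theorem stmt6_general (hG : IsSMulRegular G p) (g : G) :
    ∃ f : G →+ ℤ_[p], ‖f g‖ = pdist p g 0 := by
  have hp : p.Prime := Fact.out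
  by_cases hg : ∀ k, pDvd p k g
  · refine ⟨0, ?_⟩
    rw [pdist_eq_zero_of_forall_pDvd hp.one_lt (by rwa [sub_zero]), AddMonoidHom.zero_apply,
      norm_zero]
  · obtain ⟨k, hk, hk'⟩ := exists_pDvd_and_not_pDvd_succ hg
    rw [pdist_eq_zpow_neg hp.one_le (by rwa [sub_zero]) (by rwa [sub_zero])]
    obtain ⟨x, rfl⟩ := hk
    have hx : ∀ z : G, p • z ≠ x := by
      rintro z rfl
      exact hk' ⟨z, by rw [pow_succ, mul_smul]⟩
    obtain ⟨f, hf⟩ := exists_addMonoidHom_padicInt_norm_eq_one hG hx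
    refine ⟨f, ?_⟩
    rw [map_nsmul, nsmul_eq_mul, Nat.cast_pow, norm_mul, PadicInt.norm_p_pow, hf, mul_one]

end padic

theorem stmt6 (p : ℕ) [Fact p.Prime] (G : Type*) [AddCommGroup G]
    [NoZeroSMulDivisors ℤ G] (g : G) :
    ∃ f : G →+ ℤ_[p], ‖f g‖ = pdist p g 0 := by
  have hG : IsSMulRegular G (p : ℤ) := .of_ne_zero (mod_cast (Fact.out : p.Prime).ne_zero)
  exact stmt6_general (by simpa only [IsSMulRegular, natCast_zsmul] using hG) g
end
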